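/- (Corollary 1, cost form.) Assume each per-column feasible set C_i, i = 1,…,Nx, is nonempty and dim (K_1 + … + K_{Nx}) = dim S(0). Then for every convex cost function f : V → ℝ and for Lebesgue-almost every x0 ∈ ℝ^{Nx}, the infimum of f over the constrained feasible set T(x0) equals the infimum of f over the unconstrained feasible set S(x0); i.e., the unconstrained optimal cost is achieved under the system level constraints for almost every initial condition. -/

import Mathlib

open Matrix Finset MeasureTheory

/-!
Both feasible sets are governed by one linear map `L`, the residual of the dynamics:
`S(x0) = L⁻¹{(x0, 0)}` and `S(0) = ker L`. Equality of dimensions turns `K_i ≤ S(0)` into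
`K_1 + ⋯ + K_{Nx} = S(0)`. Fix `p_i ∈ C_i`. A trajectory `s ∈ S(x0)` differs from `∑ x0[i] p_i` by
an element of `S(0)`, hence by some `∑ k_i` with `k_i ∈ K_i`. If no `x0[i]` vanishes, then
`s = ∑ x0[i] (p_i + x0[i]⁻¹ k_i)` lies in `T(x0)`. So `T(x0) = S(x0)` off the coordinate
hyperplanes, which form a null set, and the two infima agree almost everywhere.
-/

section Superposition

variable {𝕜 V W ι : Type*} [Fintype ι] [Ring 𝕜] [AddCommGroup V] [Module 𝕜 V]
  [AddCommGroup W] [Module 𝕜 W]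

/-- The combinations `∑ i, x i • s i` with one vector `s i` taken from each set `C i`. The paper's
`T(x0)` is `superpositions C x0`. -/
def superpositions (C : ι → Set V) (x : ι → 𝕜) : Set V :=
  {s | ∃ g : ι → V, (∀ i, g i ∈ C i) ∧ s = ∑ i, x i • g i}

variable {L : V →ₗ[𝕜] W} {b : ι → W} {P : ι → Submodule 𝕜 V} {x : ι → 𝕜}

lemma map_sum_smul_of_mem_preimage {g : ι → V} (hg : ∀ i, g i ∈ L ⁻¹' {b i}) :
    L (∑ i, x i • g i) = ∑ i, x i • b i := by
  simp_rw [map_sum, map_smul]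
  exact Finset.sum_congr rfl fun i _ => congrArg (x i • ·) (hg i)

lemma add_mem_inter_preimage {Q : Submodule 𝕜 V} {w : W} {p k : V}
    (hp : p ∈ (Q : Set V) ∩ L ⁻¹' {w}) (hk : k ∈ Q ⊓ L.ker) :
    p + k ∈ (Q : Set V) ∩ L ⁻¹' {w} := by
  have hLk : L k = 0 := hk.2
  have hLp : L p = w := hp.2
  exact ⟨Q.add_mem hp.1 hk.1, by simp [hLp, hLk]⟩

theorem preimage_subset_superpositions (hne : ∀ i, ((P i : Set V) ∩ L ⁻¹' {b i}).Nonempty)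
    (hker : L.ker ≤ ⨆ i, P i ⊓ L.ker) (hx : ∀ i, IsUnit (x i)) :
    L ⁻¹' {∑ i, x i • b i} ⊆ superpositions (fun i => (P i : Set V) ∩ L ⁻¹' {b i}) x := by
  intro s hs
  choose p hp using hne
  choose u hu using hx
  have hdiff : s - ∑ i, x i • p i ∈ L.ker := by
    rw [LinearMap.mem_ker, map_sub, map_sum_smul_of_mem_preimage fun i => (hp i).2, sub_eq_zero]
    exact hs
  obtain ⟨k, hk, hksum⟩ := (Submodule.mem_iSup_iff_exists_finsupp _ _).1 (hker hdiff)
  rw [Finsupp.sum_fintype _ _ fun _ => rfl] at hksum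
  refine ⟨fun i => p i + (u i)⁻¹ • k i,
    fun i => add_mem_inter_preimage (hp i) (Submodule.smul_mem _ _ (hk i)), ?_⟩
  have hterm (i : ι) : x i • (p i + (u i)⁻¹ • k i) = x i • p i + k i := by
    rw [smul_add, ← hu i, ← Units.smul_def, ← Units.smul_def, smul_inv_smul]
  simp_rw [hterm, Finset.sum_add_distrib, hksum, add_sub_cancel]

theorem superpositions_eq_preimage (hne : ∀ i, ((P i : Set V) ∩ L ⁻¹' {b i}).Nonempty)
    (hker : L.ker ≤ ⨆ i, P i ⊓ L.ker) (hx : ∀ i, IsUnit (x i)) :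
    superpositions (fun i => (P i : Set V) ∩ L ⁻¹' {b i}) x = L ⁻¹' {∑ i, x i • b i} := by
  refine Set.Subset.antisymm ?_ (preimage_subset_superpositions hne hker hx)
  rintro _ ⟨g, hg, rfl⟩
  exact map_sum_smul_of_mem_preimage fun i => (hg i).2

end Superposition

lemma sum_smul_single_zero {𝕜 n W : Type*} [Semiring 𝕜] [AddCommMonoid W] [Module 𝕜 W] [Fintype n]
    [DecidableEq n] (x : n → 𝕜) :
    ∑ i, x i • ((Pi.single i 1, 0) : (n → 𝕜) × W) = (x, 0) := by
  simp [Prod.ext_iff, Prod.fst_sum, Prod.snd_sum, ← pi_eq_sum_univ']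

section Trajectories

variable {𝕜 n m : Type*} {T : ℕ}

/-- The trajectory space `V`: states `x(0), …, x(T-1)` indexed by `n` and inputs `u(0), …, u(T-1)`
indexed by `m`. -/
abbrev Trajectory (𝕜 n m : Type*) (T : ℕ) : Type _ :=
  (Fin T → n → 𝕜) × (Fin T → m → 𝕜)

/-- The scalar coordinates of `V`, those of the states followed by those of the inputs. -/
abbrev TrajectoryIndex (n m : Type*) (T : ℕ) : Type _ :=
  (Fin T × n) ⊕ (Fin T × m)

section CommRing

variable [CommRing 𝕜]

/-- The flattening of a state-input trajectory into its scalar coordinates, by which the supports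
`R_i` are indexed. -/
def trajectoryCoords : Trajectory 𝕜 n m T →ₗ[𝕜] (TrajectoryIndex n m T → 𝕜) where
  toFun su := Sum.elim (fun p => su.1 p.1 p.2) (fun p => su.2 p.1 p.2)
  map_add' _ _ := by ext (_ | _) <;> rfl
  map_smul' _ _ := by ext (_ | _) <;> rfl

/-- The trajectories whose coordinates indexed by `R` are zero. -/
def vanishingOn (𝕜 : Type*) [CommRing 𝕜] (R : Set (TrajectoryIndex n m T)) :
    Submodule 𝕜 (Trajectory 𝕜 n m T) :=
  (Submodule.pi R fun _ => ⊥).comap trajectoryCoords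

variable [Fintype n] [Fintype m]

/-- The paper's `S(x0)`: the trajectories of `x(t+1) = A x(t) + B u(t)` over the horizon `T` that
start at `x0` and are steered to the origin by the last input. -/
def feasibleSet (hT : 1 ≤ T) (A : Matrix n n 𝕜) (B : Matrix n m 𝕜) (x0 : n → 𝕜) :
    Set (Trajectory 𝕜 n m T) :=
  {su | su.1 ⟨0, hT⟩ = x0 ∧
    (∀ t : ℕ, (ht : t + 1 < T) →
      su.1 ⟨t + 1, ht⟩ =
        A *ᵥ su.1 ⟨t, Nat.lt_of_succ_lt ht⟩ + B *ᵥ su.2 ⟨t, Nat.lt_of_succ_lt ht⟩) ∧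
    A *ᵥ su.1 ⟨T - 1, Nat.sub_one_lt_of_lt hT⟩ + B *ᵥ su.2 ⟨T - 1, Nat.sub_one_lt_of_lt hT⟩ = 0}

/-- The feasible trajectories from `x0` that vanish on `R`. The paper's `C_i` and `K_i` are the
cases `x0 = e_i` and `x0 = 0` with `R = R_i`. -/
def supportedFeasibleSet (hT : 1 ≤ T) (A : Matrix n n 𝕜) (B : Matrix n m 𝕜)
    (R : Set (TrajectoryIndex n m T)) (x0 : n → 𝕜) : Set (Trajectory 𝕜 n m T) :=
  {s ∈ feasibleSet hT A B x0 | ∀ c ∈ R, trajectoryCoords s c = 0}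

/-- The state `A x(t) + B u(t)` reached from time `t`, as a linear function of the trajectory. -/
def nextState (A : Matrix n n 𝕜) (B : Matrix n m 𝕜) (t : Fin T) :
    Trajectory 𝕜 n m T →ₗ[𝕜] (n → 𝕜) :=
  A.mulVecLin ∘ₗ LinearMap.proj t ∘ₗ LinearMap.fst 𝕜 _ _ +
    B.mulVecLin ∘ₗ LinearMap.proj t ∘ₗ LinearMap.snd 𝕜 _ _

/-- The initial state of a trajectory, together with its defect in each step of the dynamics and
the state following the horizon. The feasible trajectories from `x0` are those mapped to
`(x0, 0)`. -/
def dynamicsResidual (hT : 1 ≤ T) (A : Matrix n n 𝕜) (B : Matrix n m 𝕜) :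
    Trajectory 𝕜 n m T →ₗ[𝕜] (n → 𝕜) × ({t : ℕ // t + 1 < T} → n → 𝕜) × (n → 𝕜) :=
  (LinearMap.proj ⟨0, hT⟩ ∘ₗ LinearMap.fst 𝕜 _ _).prod
    ((LinearMap.pi fun t : {t : ℕ // t + 1 < T} =>
        LinearMap.proj ⟨t + 1, t.2⟩ ∘ₗ LinearMap.fst 𝕜 _ _ -
          nextState A B ⟨t, Nat.lt_of_succ_lt t.2⟩).prod
      (nextState A B ⟨T - 1, Nat.sub_one_lt_of_lt hT⟩))

variable (hT : 1 ≤ T) (A : Matrix n n 𝕜) (B : Matrix n m 𝕜)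

lemma feasibleSet_eq_preimage_dynamicsResidual (x0 : n → 𝕜) :
    feasibleSet hT A B x0 = dynamicsResidual hT A B ⁻¹' {(x0, 0)} := by
  ext su
  simp [feasibleSet, dynamicsResidual, nextState, Prod.ext_iff, funext_iff, sub_eq_zero]

lemma supportedFeasibleSet_eq_inter_preimage (R : Set (TrajectoryIndex n m T)) (x0 : n → 𝕜) :
    supportedFeasibleSet hT A B R x0 =
      ↑(vanishingOn 𝕜 R) ∩ dynamicsResidual hT A B ⁻¹' {(x0, 0)} := by
  rw [← feasibleSet_eq_preimage_dynamicsResidual, Set.inter_comm]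
  rfl

lemma span_feasibleSet_zero :
    Submodule.span 𝕜 (feasibleSet hT A B 0) = (dynamicsResidual hT A B).ker := by
  rw [feasibleSet_eq_preimage_dynamicsResidual]
  exact Submodule.span_eq (dynamicsResidual hT A B).ker

lemma span_iUnion_supportedFeasibleSet_zero {ι : Type*} (R : ι → Set (TrajectoryIndex n m T)) :
    Submodule.span 𝕜 (⋃ i, supportedFeasibleSet hT A B (R i) 0) =
      ⨆ i, vanishingOn 𝕜 (R i) ⊓ (dynamicsResidual hT A B).ker := by
  simp_rw [Submodule.span_iUnion, supportedFeasibleSet_eq_inter_preimage]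
  exact iSup_congr fun i => Submodule.span_eq (vanishingOn 𝕜 (R i) ⊓ (dynamicsResidual hT A B).ker)

end CommRing

variable [Field 𝕜] [Fintype n] [Fintype m]

lemma ker_dynamicsResidual_le_iSup_of_finrank_eq (hT : 1 ≤ T) (A : Matrix n n 𝕜) (B : Matrix n m 𝕜)
    {ι : Type*} (R : ι → Set (TrajectoryIndex n m T))
    (hrank : Module.finrank 𝕜 (Submodule.span 𝕜 (⋃ i, supportedFeasibleSet hT A B (R i) 0)) =
      Module.finrank 𝕜 (Submodule.span 𝕜 (feasibleSet hT A B 0))) :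
    (dynamicsResidual hT A B).ker ≤ ⨆ i, vanishingOn 𝕜 (R i) ⊓ (dynamicsResidual hT A B).ker := by
  rw [span_iUnion_supportedFeasibleSet_zero, span_feasibleSet_zero] at hrank
  exact (Submodule.eq_of_le_of_finrank_eq (iSup_le fun _ => inf_le_right) hrank).ge

theorem constrained_cost_optimality_general [DecidableEq n] (hT : 1 ≤ T)
    (A : Matrix n n 𝕜) (B : Matrix n m 𝕜) (R : n → Set (TrajectoryIndex n m T))
    (hne : ∀ i, (supportedFeasibleSet hT A B (R i) (Pi.single i 1)).Nonempty)
    (hrank : Module.finrank 𝕜 (Submodule.span 𝕜 (⋃ i, supportedFeasibleSet hT A B (R i) 0)) =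
      Module.finrank 𝕜 (Submodule.span 𝕜 (feasibleSet hT A B 0)))
    {x0 : n → 𝕜} (hx0 : ∀ i, x0 i ≠ 0) :
    superpositions (fun i => supportedFeasibleSet hT A B (R i) (Pi.single i 1)) x0 =
      feasibleSet hT A B x0 := by
  have hker := ker_dynamicsResidual_le_iSup_of_finrank_eq hT A B R hrank
  simp_rw [supportedFeasibleSet_eq_inter_preimage] at hne ⊢
  rw [superpositions_eq_preimage hne hker fun i => (hx0 i).isUnit, sum_smul_single_zero,
    feasibleSet_eq_preimage_dynamicsResidual]

end Trajectories

/-- Corollary 1, cost form: if each per-column feasible set `C_i` is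
nonempty and `dim (K_1 + … + K_{Nx}) = dim S(0)`, then for every convex cost `f` and
Lebesgue-almost every `x0`, the infimum of `f` over the constrained feasible set `T(x0)`
equals its infimum over the unconstrained feasible set `S(x0)`. -/
theorem constrained_cost_optimality {Nx Nu T : ℕ} (hT : 1 ≤ T)
    (A : Matrix (Fin Nx) (Fin Nx) ℝ) (B : Matrix (Fin Nx) (Fin Nu) ℝ)
    (S : (Fin Nx → ℝ) → Set ((Fin T → Fin Nx → ℝ) × (Fin T → Fin Nu → ℝ)))
    (hS : ∀ x0 : Fin Nx → ℝ, S x0 = { su |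
        su.1 ⟨0, by omega⟩ = x0 ∧
        (∀ t : ℕ, (ht : t + 1 < T) →
          su.1 ⟨t + 1, ht⟩ =
            A.mulVec (su.1 ⟨t, by omega⟩) + B.mulVec (su.2 ⟨t, by omega⟩)) ∧
        A.mulVec (su.1 ⟨T - 1, by omega⟩) + B.mulVec (su.2 ⟨T - 1, by omega⟩) = 0 })
    (R : Fin Nx → Set ((Fin T × Fin Nx) ⊕ (Fin T × Fin Nu)))
    (coord : ((Fin T → Fin Nx → ℝ) × (Fin T → Fin Nu → ℝ)) →
      ((Fin T × Fin Nx) ⊕ (Fin T × Fin Nu)) → ℝ)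
    (hcoord : ∀ su c, coord su c =
      Sum.elim (fun p : Fin T × Fin Nx => su.1 p.1 p.2)
        (fun p : Fin T × Fin Nu => su.2 p.1 p.2) c)
    (C : Fin Nx → Set ((Fin T → Fin Nx → ℝ) × (Fin T → Fin Nu → ℝ)))
    (hC : ∀ i, C i = { s ∈ S (Pi.single i 1) | ∀ c ∈ R i, coord s c = 0 })
    (K : Fin Nx → Set ((Fin T → Fin Nx → ℝ) × (Fin T → Fin Nu → ℝ)))
    (hK : ∀ i, K i = { k ∈ S 0 | ∀ c ∈ R i, coord k c = 0 })
    (Tset : (Fin Nx → ℝ) → Set ((Fin T → Fin Nx → ℝ) × (Fin T → Fin Nu → ℝ)))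
    (hTset : ∀ x0 : Fin Nx → ℝ, Tset x0 = { s |
        ∃ f : Fin Nx → (Fin T → Fin Nx → ℝ) × (Fin T → Fin Nu → ℝ),
          (∀ i, f i ∈ C i) ∧ s = ∑ i : Fin Nx, x0 i • f i })
    (hCne : ∀ i, (C i).Nonempty)
    (hrank : Module.finrank ℝ (Submodule.span ℝ (⋃ i : Fin Nx, K i))
      = Module.finrank ℝ (Submodule.span ℝ (S 0)))
    (f : ((Fin T → Fin Nx → ℝ) × (Fin T → Fin Nu → ℝ)) → ℝ)
    (hf : ConvexOn ℝ Set.univ f) :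
    ∀ᵐ x0 : Fin Nx → ℝ, sInf (f '' Tset x0) = sInf (f '' S x0) := by
  rcases funext hS, funext₂ hcoord, funext hC, funext hK, funext hTset with
    ⟨rfl, rfl, rfl, rfl, rfl⟩
  filter_upwards [ae_all_iff.2 fun i => Measure.ae_eval_ne (fun _ => volume) i 0] with x0 hx0
  exact congrArg (sInf <| f '' ·) (constrained_cost_optimality_general hT A B R hCne hrank hx0)
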